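/- Let k be an algebraically closed field of characteristic 0, let J be an invertible 4×4 matrix over k with Jᵀ = −J, let d ∈ kˣ, and let A be a 4×4 matrix over k with Aᵀ·J·A = d·J. If −d is an eigenvalue of the induced endomorphism ⋀²A of the exterior square ⋀²(k⁴), then trace(A) = 0. -/

import Mathlib

/-!
Statement 13: Let `k` be an algebraically closed field of characteristic 0, `J` an invertible
`4×4` matrix over `k` with `Jᵀ = −J`, `d ∈ kˣ`, and `A` a `4×4` matrix with `Aᵀ·J·A = d·J`.
If `−d` is an eigenvalue of the induced endomorphism `⋀²A` of the exterior square `⋀²(k⁴)`,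
then `trace A = 0`.
-/

open Matrix Module

section ExtSq
variable {k : Type} [Field k]
variable {V W : Type} [AddCommGroup V] [Module k V] [AddCommGroup W] [Module k W]

lemma map_mem_exteriorPower (f : V →ₗ[k] W) (n : ℕ) {x : ExteriorAlgebra k V}
    (hx : x ∈ ⋀[k]^n V) : ExteriorAlgebra.map f x ∈ ⋀[k]^n W := by
  rw [← ExteriorAlgebra.ιMulti_span_fixedDegree] at hx ⊢
  induction hx using Submodule.span_induction with
  | mem y hy =>
      obtain ⟨m, rfl⟩ := hy
      rw [ExteriorAlgebra.map_apply_ιMulti]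
      exact Submodule.subset_span ⟨f ∘ m, rfl⟩
  | zero => simp
  | add y z _ _ h1 h2 => rw [map_add]; exact Submodule.add_mem _ h1 h2
  | smul c y _ h => rw [_root_.map_smul]; exact Submodule.smul_mem _ c h

/-- The exterior square of a linear map, as a map between second exterior powers. -/
noncomputable def extSq (f : V →ₗ[k] W) : (⋀[k]^2 V) →ₗ[k] (⋀[k]^2 W) :=
  LinearMap.restrict (ExteriorAlgebra.map f).toLinearMap
    (fun _ hx => map_mem_exteriorPower f 2 hx)

end ExtSq

section SkewMatrix
variable {k : Type} [Field k]

/-- The skew-symmetric `4×4` matrix with prescribed entries above the diagonal. -/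
def skewFour (a b c d e f : k) : Matrix (Fin 4) (Fin 4) k :=
  !![0, a, b, c; -a, 0, d, e; -b, -d, 0, f; -c, -e, -f, 0]

lemma eq_skewFour [CharZero k] {S : Matrix (Fin 4) (Fin 4) k} (hS : Sᵀ = -S) :
    S = skewFour (S 0 1) (S 0 2) (S 0 3) (S 1 2) (S 1 3) (S 2 3) := by
  have h : ∀ i j, S j i = -S i j := fun i j => congrFun (congrFun hS i) j
  have h0 : ∀ i, S i i = 0 := fun i => self_eq_neg.mp (h i i)
  ext i j
  fin_cases i <;> fin_cases j <;> simp [skewFour, h0] <;> exact h _ _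

lemma det_skewFour (a b c d e f : k) :
    (skewFour a b c d e f).det = (a * f - b * e + c * d) ^ 2 := by
  simp [skewFour, Matrix.det_succ_row_zero, Fin.sum_univ_succ, Fin.succAbove]
  ring

set_option maxHeartbeats 2000000 in
/-- The polarised Cayley–Hamilton identity for products of two skew-symmetric `4×4` matrices. -/
lemma skewFour_mul_add_mul (a b c d e f s₁ s₂ s₃ s₄ s₅ s₆ r₁ r₂ r₃ r₄ r₅ r₆ : k) :
    let J := skewFour a b c d e f
    let M := skewFour s₁ s₂ s₃ s₄ s₅ s₆ * J
    let N := skewFour r₁ r₂ r₃ r₄ r₅ r₆ * J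
    (2 : k) • (M * N + N * M) = M.trace • N + N.trace • M -
      (2 * (s₁ * r₆ + s₆ * r₁ - s₂ * r₅ - s₅ * r₂ + s₃ * r₄ + s₄ * r₃) *
        (a * f - b * e + c * d)) • (1 : Matrix (Fin 4) (Fin 4) k) := by
  intro J M N
  ext i j
  fin_cases i <;> fin_cases j <;>
    simp [J, M, N, skewFour, Matrix.trace, Fin.sum_univ_four] <;> ring

lemma trace_mul_eq_zero_of_anticommute [CharZero k] {A M : Matrix (Fin 4) (Fin 4) k}
    (h : A * M = -(M * A)) : (A * M).trace = 0 := by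
  refine self_eq_neg.mp ?_
  conv_lhs => rw [h, Matrix.trace_neg, Matrix.trace_mul_comm]

lemma trace_eq_zero_of_anticommute [CharZero k] {J S A : Matrix (Fin 4) (Fin 4) k}
    (hJ : IsUnit J.det) (hJskew : Jᵀ = -J) (hS : Sᵀ = -S) (hS0 : S ≠ 0)
    (hM : A * (S * J) = -(S * J * A)) (htr : (S * J).trace = 0) : A.trace = 0 := by
  have hAM := trace_mul_eq_zero_of_anticommute hM
  obtain ⟨a, b, c, d, e, f, rfl⟩ : ∃ a b c d e f, J = skewFour a b c d e f :=
    ⟨_, _, _, _, _, _, eq_skewFour hJskew⟩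
  obtain ⟨s₁, s₂, s₃, s₄, s₅, s₆, rfl⟩ : ∃ a b c d e f, S = skewFour a b c d e f :=
    ⟨_, _, _, _, _, _, eq_skewFour hS⟩
  have hpf : a * f - b * e + c * d ≠ 0 := by
    rw [det_skewFour] at hJ
    exact fun h => hJ.ne_zero (by rw [h]; ring)
  have key : ∀ r₁ r₂ r₃ r₄ r₅ r₆ : k, A.trace ≠ 0 →
      s₁ * r₆ + s₆ * r₁ - s₂ * r₅ - s₅ * r₂ + s₃ * r₄ + s₄ * r₃ = 0 := by
    intro r₁ r₂ r₃ r₄ r₅ r₆ hA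
    have h := skewFour_mul_add_mul a b c d e f s₁ s₂ s₃ s₄ s₅ s₆ r₁ r₂ r₃ r₄ r₅ r₆
    simp only at h
    generalize skewFour s₁ s₂ s₃ s₄ s₅ s₆ * skewFour a b c d e f = M at *
    generalize skewFour r₁ r₂ r₃ r₄ r₅ r₆ * skewFour a b c d e f = N at *
    have h1 : (A * (M * N + N * M)).trace = 0 := by
      rw [mul_add, Matrix.trace_add, ← mul_assoc, hM, ← mul_assoc A N M,
        Matrix.trace_mul_comm (A * N) M, neg_mul, Matrix.trace_neg, mul_assoc]
      ring
    have h2 := congrArg (fun X => (A * X).trace) h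
    simp only [Matrix.mul_smul, Matrix.trace_smul, h1, htr, zero_smul, zero_add, mul_sub,
      Matrix.trace_sub, hAM, mul_one, smul_eq_mul, mul_zero, zero_sub] at h2
    simpa [hA, hpf] using h2.symm
  by_contra hA
  have h1 : s₁ = 0 := by simpa using key 0 0 0 0 0 1 hA
  have h2 : s₂ = 0 := by simpa using key 0 0 0 0 1 0 hA
  have h3 : s₃ = 0 := by simpa using key 0 0 0 1 0 0 hA
  have h4 : s₄ = 0 := by simpa using key 0 0 1 0 0 0 hA
  have h5 : s₅ = 0 := by simpa using key 0 1 0 0 0 0 hA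
  have h6 : s₆ = 0 := by simpa using key 1 0 0 0 0 0 hA
  refine hS0 ?_
  subst h1 h2 h3 h4 h5 h6
  ext i j
  fin_cases i <;> fin_cases j <;> simp [skewFour]

lemma trace_eq_zero_of_similitude [CharZero k] {J S A : Matrix (Fin 4) (Fin 4) k}
    (hJ : IsUnit J.det) (hJskew : Jᵀ = -J) {d : k} (hd : d ≠ 0)
    (hA : Aᵀ * J * A = d • J) (hS : Sᵀ = -S) (hS0 : S ≠ 0)
    (hSA : A * S * Aᵀ = (-d) • S) : A.trace = 0 := by
  have hM : A * (S * J) = -(S * J * A) := by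
    have h : A * S * (Aᵀ * J * A) = A * S * Aᵀ * (J * A) := by simp only [mul_assoc]
    rw [hA, hSA, Matrix.mul_smul, Matrix.smul_mul, neg_smul, ← smul_neg] at h
    have h' := smul_right_injective _ hd h
    simpa only [mul_assoc] using h'
  refine trace_eq_zero_of_anticommute hJ hJskew hS hS0 hM ?_
  have h : d * (S * J).trace = -(d * (S * J).trace) := by
    calc d * (S * J).trace = (S * (Aᵀ * J * A)).trace := by
          rw [hA, Matrix.mul_smul, Matrix.trace_smul, smul_eq_mul]
      _ = (A * S * Aᵀ * J).trace := by
          rw [← mul_assoc, Matrix.trace_mul_comm]; simp only [mul_assoc]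
      _ = -(d * (S * J).trace) := by
          rw [hSA, Matrix.smul_mul, Matrix.trace_smul, smul_eq_mul, neg_mul]
  exact (mul_eq_zero.mp (self_eq_neg.mp h)).resolve_left hd

end SkewMatrix

section ToMatrix
variable {k : Type} [Field k]

/-- The alternating map `(u, v) ↦ u vᵀ - v uᵀ`. -/
def wedgeMatrix (n : ℕ) : (Fin n → k) [⋀^Fin 2]→ₗ[k] Matrix (Fin n) (Fin n) k where
  toFun w := Matrix.vecMulVec (w 0) (w 1) - Matrix.vecMulVec (w 1) (w 0)
  map_update_add' := by
    intro inst w i x y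
    obtain rfl : inst = instDecidableEqFin 2 := Subsingleton.elim _ _
    ext a b
    fin_cases i <;> simp [Matrix.vecMulVec_apply] <;> ring
  map_update_smul' := by
    intro inst w i c x
    obtain rfl : inst = instDecidableEqFin 2 := Subsingleton.elim _ _
    ext a b
    fin_cases i <;> simp [Matrix.vecMulVec_apply] <;> ring
  map_eq_zero_of_eq' w i j h hij := by
    have h01 : w 0 = w 1 := by
      fin_cases i <;> fin_cases j <;> simp_all
    simp [h01]

/-- The map `⋀²(kⁿ) → Mₙ(k)` sending `u ∧ v` to `u vᵀ - v uᵀ`. -/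
noncomputable def extSqToMatrix (n : ℕ) :
    (⋀[k]^2 (Fin n → k)) →ₗ[k] Matrix (Fin n) (Fin n) k :=
  exteriorPower.alternatingMapLinearEquiv (wedgeMatrix n)

lemma extSqToMatrix_ιMulti {n : ℕ} (w : Fin 2 → Fin n → k) :
    extSqToMatrix n (exteriorPower.ιMulti k 2 w) =
      Matrix.vecMulVec (w 0) (w 1) - Matrix.vecMulVec (w 1) (w 0) :=
  exteriorPower.alternatingMapLinearEquiv_apply_ιMulti _ _

lemma extSq_ιMulti {V W : Type} [AddCommGroup V] [Module k V] [AddCommGroup W] [Module k W]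
    (f : V →ₗ[k] W) (w : Fin 2 → V) :
    extSq f (exteriorPower.ιMulti k 2 w) = exteriorPower.ιMulti k 2 (f ∘ w) :=
  Subtype.ext (ExteriorAlgebra.map_apply_ιMulti f w)

lemma transpose_extSqToMatrix {n : ℕ} (x : ⋀[k]^2 (Fin n → k)) :
    (extSqToMatrix n x)ᵀ = -extSqToMatrix n x := by
  have h : (Matrix.transposeLinearEquiv (Fin n) (Fin n) k k).toLinearMap ∘ₗ extSqToMatrix n =
      -extSqToMatrix (k := k) n := by
    refine exteriorPower.linearMap_ext (AlternatingMap.ext fun w => ?_)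
    simp [extSqToMatrix_ιMulti, Matrix.transpose_vecMulVec]
  exact LinearMap.congr_fun h x

lemma extSqToMatrix_extSq {n : ℕ} (A : Matrix (Fin n) (Fin n) k) (x : ⋀[k]^2 (Fin n → k)) :
    extSqToMatrix n (extSq (Matrix.toLin' A) x) = A * extSqToMatrix n x * Aᵀ := by
  have h : extSqToMatrix n ∘ₗ extSq (Matrix.toLin' A) =
      (LinearMap.mulRight k Aᵀ ∘ₗ LinearMap.mulLeft k A) ∘ₗ extSqToMatrix n := by
    refine exteriorPower.linearMap_ext (AlternatingMap.ext fun w => ?_)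
    simp [extSqToMatrix_ιMulti, extSq_ιMulti, mul_sub, sub_mul, Matrix.mul_vecMulVec,
      Matrix.vecMulVec_mul, Matrix.vecMul_transpose]
  exact LinearMap.congr_fun h x

lemma extSqToMatrix_injective [CharZero k] (n : ℕ) :
    Function.Injective (extSqToMatrix (k := k) n) := by
  let e : Fin n → Fin n → k := fun i => Pi.single i 1
  let g : Matrix (Fin n) (Fin n) k →ₗ[k] ⋀[k]^2 (Fin n → k) :=
    ∑ i, ∑ j, (Matrix.entryLinearMap k k i j).smulRight (exteriorPower.ιMulti k 2 ![e i, e j])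
  have hg : ∀ u v : Fin n → k,
      g (Matrix.vecMulVec u v) = exteriorPower.ιMulti k 2 ![u, v] := by
    intro u v
    have update_zero : ∀ x y z : Fin n → k, Function.update ![x, y] 0 z = ![z, y] := by
      intro x y z
      ext i
      fin_cases i <;> simp
    have update_one : ∀ x y z : Fin n → k, Function.update ![x, y] 1 z = ![x, z] := by
      intro x y z
      ext i
      fin_cases i <;> simp
    have hu : ∀ u : Fin n → k, u = ∑ i, u i • e i := fun u => pi_eq_sum_univ' u
    have h1 : ∀ y : Fin n → k, exteriorPower.ιMulti k 2 ![u, y] =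
        ∑ i, u i • exteriorPower.ιMulti k 2 ![e i, y] := by
      intro y
      have h := map_sum ((exteriorPower.ιMulti k 2).toMultilinearMap.toLinearMap ![0, y] 0)
        (fun i => u i • e i) Finset.univ
      rw [← hu u] at h
      simpa [_root_.map_smul, update_zero] using h
    have h2 : ∀ x : Fin n → k, exteriorPower.ιMulti k 2 ![x, v] =
        ∑ j, v j • exteriorPower.ιMulti k 2 ![x, e j] := by
      intro x
      have h := map_sum ((exteriorPower.ιMulti k 2).toMultilinearMap.toLinearMap ![x, 0] 1)
        (fun i => v i • e i) Finset.univ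
      rw [← hu v] at h
      simpa [_root_.map_smul, update_one] using h
    rw [h1 v]
    simp_rw [h2, Finset.smul_sum, smul_smul]
    simp [g, Matrix.vecMulVec_apply]
  have h : g ∘ₗ extSqToMatrix n = (2 : k) • LinearMap.id := by
    refine exteriorPower.linearMap_ext (AlternatingMap.ext fun w => ?_)
    have hw : ![w 0, w 1] = w := by ext i; fin_cases i <;> rfl
    have hswap : exteriorPower.ιMulti k 2 ![w 1, w 0] = -exteriorPower.ιMulti k 2 w := by
      rw [← (exteriorPower.ιMulti k 2).map_swap w (show (0 : Fin 2) ≠ 1 by decide)]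
      congr 1
      ext i
      fin_cases i <;> rfl
    simp [extSqToMatrix_ιMulti, hg, hswap, hw, two_smul]
  intro x y hxy
  have hx := LinearMap.congr_fun h x
  have hy := LinearMap.congr_fun h y
  simp only [LinearMap.comp_apply, hxy] at hx hy
  exact smul_right_injective _ (two_ne_zero : (2 : k) ≠ 0) (hx.symm.trans hy)

end ToMatrix

theorem stmt_13 {k : Type} [Field k] [IsAlgClosed k] [CharZero k]
    (J A : Matrix (Fin 4) (Fin 4) k)
    (hJ : IsUnit J.det) (hJskew : Jᵀ = -J)
    (d : k) (hd : d ≠ 0)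
    (hA : Aᵀ * J * A = d • J)
    -- `−d` is an eigenvalue of the induced endomorphism `⋀²A` of `⋀²(k⁴)`
    (heig : Module.End.HasEigenvalue
      (extSq (Matrix.toLin' A) : Module.End k (⋀[k]^2 (Fin 4 → k))) (-d)) :
    A.trace = 0 := by
  obtain ⟨x, hx⟩ := heig.exists_hasEigenvector
  refine trace_eq_zero_of_similitude hJ hJskew hd hA (transpose_extSqToMatrix x) ?_ ?_
  · exact fun h => hx.2 (extSqToMatrix_injective 4 (h.trans (map_zero _).symm))
  · rw [← extSqToMatrix_extSq, hx.apply_eq_smul, _root_.map_smul]
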